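/- Let G be a finite simple graph on vertex set V and F ⊆ E(G). Suppose F' has minimum size and F'' has maximum size among all edge sets of the form F Δ ∇_G(W) with W ⊆ V (symmetric difference of F with a cut of G), i.e., among the coset F + C^⊥(G) of the cut space. Then for every vertex v, d_{F'}(v) ≤ d_G(v) − d_{F'}(v), and d_{F''}(v) ≥ d_G(v) − d_{F''}(v). -/

import Mathlib

/-- The cut `∇_G(W)`: edges of `G` with exactly one endpoint in `W`. -/
def cutEdges {n : ℕ} (G : SimpleGraph (Fin n)) (W : Set (Fin n)) : Set (Sym2 (Fin n)) :=
  {e | ∃ x y : Fin n, e = s(x, y) ∧ G.Adj x y ∧ x ∈ W ∧ y ∉ W}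

/-- The degree of a vertex `v` in an edge set `F`. -/
noncomputable def degOf {n : ℕ} (F : Set (Sym2 (Fin n))) (v : Fin n) : ℕ :=
  {e ∈ F | v ∈ e}.ncard

/-!
Replacing `W` by `W ∆ {v}` adds to a member `H ⊆ E(G)` of the coset the star of `v`, which is the
cut `∇_G({v})`. This changes the size of `H` by `d_G(v) - 2 d_H(v)`, a quantity that is nonnegative
when `H` is smallest in the coset and nonpositive when `H` is largest.
-/

open scoped symmDiff

section SymmDiff

variable {α : Type*} {s t : Set α}

theorem ncard_symmDiff_add_two_mul_ncard_inter (hs : s.Finite) (ht : t.Finite) :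
    (s ∆ t).ncard + 2 * (s ∩ t).ncard = s.ncard + t.ncard := by
  have hsymm : (s ∆ t).ncard = (s \ t).ncard + (t \ s).ncard :=
    Set.ncard_union_eq disjoint_sdiff_sdiff hs.sdiff ht.sdiff
  have hs_split := Set.ncard_inter_add_ncard_sdiff_eq_ncard s t hs
  have ht_split := Set.ncard_inter_add_ncard_sdiff_eq_ncard t s ht
  rw [Set.inter_comm] at ht_split
  lia

theorem ncard_le_ncard_symmDiff_iff (hs : s.Finite) (ht : t.Finite) :
    s.ncard ≤ (s ∆ t).ncard ↔ 2 * (s ∩ t).ncard ≤ t.ncard := by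
  have := ncard_symmDiff_add_two_mul_ncard_inter hs ht
  lia

theorem ncard_symmDiff_le_ncard_iff (hs : s.Finite) (ht : t.Finite) :
    (s ∆ t).ncard ≤ s.ncard ↔ t.ncard ≤ 2 * (s ∩ t).ncard := by
  have := ncard_symmDiff_add_two_mul_ncard_inter hs ht
  lia

end SymmDiff

section EdgeCut

variable {V : Type*} (G : SimpleGraph V)

/-- The cut `∇_G(W)` of a graph on an arbitrary vertex type, encoded as the edge set of the
bipartite subgraph of `G` between `W` and its complement. -/
def edgeCut (W : Set V) : Set (Sym2 V) :=
  (G.between W Wᶜ).edgeSet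

theorem mk_mem_edgeCut_iff {W : Set V} {x y : V} :
    s(x, y) ∈ edgeCut G W ↔ G.Adj x y ∧ (x ∈ W ∧ y ∉ W ∨ x ∉ W ∧ y ∈ W) :=
  Iff.rfl

theorem edgeCut_subset_edgeSet (W : Set V) : edgeCut G W ⊆ G.edgeSet :=
  SimpleGraph.edgeSet_mono SimpleGraph.between_le

theorem edgeCut_symmDiff (W U : Set V) : edgeCut G (W ∆ U) = edgeCut G W ∆ edgeCut G U := by
  ext ⟨x, y⟩
  simp only [Set.mem_symmDiff, mk_mem_edgeCut_iff]
  tauto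

theorem edgeCut_singleton (v : V) : edgeCut G {v} = G.incidenceSet v := by
  ext ⟨x, y⟩
  simp only [mk_mem_edgeCut_iff, SimpleGraph.mk'_mem_incidenceSet_iff, Set.mem_singleton_iff]
  grind [G.ne_of_adj]

variable {G} {F : Set (Sym2 V)}

theorem symmDiff_edgeCut_subset_edgeSet (hF : F ⊆ G.edgeSet) (W : Set V) :
    F ∆ edgeCut G W ⊆ G.edgeSet :=
  Set.symmDiff_subset_union.trans (Set.union_subset hF (edgeCut_subset_edgeSet G W))

theorem symmDiff_edgeCut_symmDiff_singleton (F : Set (Sym2 V)) (W : Set V) (v : V) :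
    F ∆ edgeCut G (W ∆ {v}) = (F ∆ edgeCut G W) ∆ G.incidenceSet v := by
  rw [edgeCut_symmDiff, edgeCut_singleton, symmDiff_assoc]

theorem inter_incidenceSet_eq_sep (hF : F ⊆ G.edgeSet) (v : V) :
    F ∩ G.incidenceSet v = {e ∈ F | v ∈ e} :=
  Set.ext fun _ => ⟨fun he => ⟨he.1, he.2.2⟩, fun he => ⟨he.1, hF he.1, he.2⟩⟩

theorem min_max_of_cut_coset_degrees_general (hG : G.edgeSet.Finite) (hF : F ⊆ G.edgeSet)
    {F' F'' : Set (Sym2 V)}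
    (hF'mem : ∃ W, F' = F ∆ edgeCut G W) (hF'min : ∀ W, F'.ncard ≤ (F ∆ edgeCut G W).ncard)
    (hF''mem : ∃ W, F'' = F ∆ edgeCut G W) (hF''max : ∀ W, (F ∆ edgeCut G W).ncard ≤ F''.ncard)
    (v : V) :
    2 * {e ∈ F' | v ∈ e}.ncard ≤ {e ∈ G.edgeSet | v ∈ e}.ncard ∧
      {e ∈ G.edgeSet | v ∈ e}.ncard ≤ 2 * {e ∈ F'' | v ∈ e}.ncard := by
  obtain ⟨W', rfl⟩ := hF'mem
  obtain ⟨W'', rfl⟩ := hF''mem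
  have hsub := symmDiff_edgeCut_subset_edgeSet hF
  have hstar : (G.incidenceSet v).Finite := hG.subset (G.incidenceSet_subset v)
  have hmin := hF'min (W' ∆ {v})
  have hmax := hF''max (W'' ∆ {v})
  rw [symmDiff_edgeCut_symmDiff_singleton] at hmin hmax
  rw [← inter_incidenceSet_eq_sep (hsub W'), ← inter_incidenceSet_eq_sep (hsub W'')]
  exact ⟨(ncard_le_ncard_symmDiff_iff (hG.subset (hsub W')) hstar).1 hmin,
    (ncard_symmDiff_le_ncard_iff (hG.subset (hsub W'')) hstar).1 hmax⟩

end EdgeCut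

theorem cutEdges_eq_edgeCut {n : ℕ} (G : SimpleGraph (Fin n)) : cutEdges G = edgeCut G := by
  ext W ⟨x, y⟩
  simp only [cutEdges, Set.mem_ofPred_eq, mk_mem_edgeCut_iff]
  grind [G.adj_comm]

theorem min_max_of_cut_coset_degrees
    (n : ℕ) (G : SimpleGraph (Fin n)) (F : Set (Sym2 (Fin n))) (hF : F ⊆ G.edgeSet)
    (F' F'' : Set (Sym2 (Fin n)))
    (hF'mem : ∃ W : Set (Fin n), F' = symmDiff F (cutEdges G W))
    (hF'min : ∀ W : Set (Fin n), F'.ncard ≤ (symmDiff F (cutEdges G W)).ncard)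
    (hF''mem : ∃ W : Set (Fin n), F'' = symmDiff F (cutEdges G W))
    (hF''max : ∀ W : Set (Fin n), (symmDiff F (cutEdges G W)).ncard ≤ F''.ncard) :
    ∀ v : Fin n,
      (degOf F' v : ℤ) ≤ (degOf G.edgeSet v : ℤ) - (degOf F' v : ℤ) ∧
      (degOf F'' v : ℤ) ≥ (degOf G.edgeSet v : ℤ) - (degOf F'' v : ℤ) := by
  intro v
  rw [cutEdges_eq_edgeCut] at hF'mem hF'min hF''mem hF''max
  have hdeg :=
    min_max_of_cut_coset_degrees_general G.edgeSet.toFinite hF hF'mem hF'min hF''mem hF''max v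
  unfold degOf
  lia
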